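/- arXiv:2311.18227 — 3 statements merged into one kernel-verified Lean document; each statement's English description precedes it below -/
import Mathlib

section
/- Let n ≥ 2 and let σ be a permutation of {1,…,n} that avoids 1324, such that the position of n in σ is exactly one more than the position of 1 (i.e., σ⁻¹(n) = σ⁻¹(1) + 1). Then, writing p = σ⁻¹(1), the prefix word σ(1)…σ(p−1) avoids the pattern 132 (there are no i < j < k ≤ p−1 with σ(i) < σ(k) < σ(j)) and the suffix word σ(p+2)…σ(n) avoids the pattern 213 (there are no p+1 < i < j < k ≤ n with σ(j) < σ(i) < σ(k)). -/
/-- A permutation of `{1,…,n}` (encoded as `Equiv.Perm (Fin n)` with 0-based values)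
avoids the pattern 1324 if there are no indices `i < j < k < l` with
`σ i < σ k < σ j < σ l`. -/
def Avoids1324 {n : ℕ} (σ : Equiv.Perm (Fin n)) : Prop :=
  ¬ ∃ i j k l : Fin n, i < j ∧ j < k ∧ k < l ∧ σ i < σ k ∧ σ k < σ j ∧ σ j < σ l

/-!
The entry `n` can serve as the `4` of a 1324 pattern for everything to its left, so the entries
left of `n` avoid 132; dually, the entry `1` can serve as the `1`, so the entries right of `1`
avoid 213. If `1` precedes `n`, then the entries left of `1` are also left of `n`, and the entries
right of `n` are also right of `1`.
-/

section Patterns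

variable {α β : Type*} [Preorder α] [LT β]

/-- The entries of the word `f` strictly before the position `p` avoid the pattern 132. -/
def Avoids132Before (f : α → β) (p : α) : Prop :=
  ¬ ∃ i j k : α, i < j ∧ j < k ∧ k < p ∧ f i < f k ∧ f k < f j

/-- The entries of the word `f` strictly after the position `p` avoid the pattern 213. -/
def Avoids213After (f : α → β) (p : α) : Prop :=
  ¬ ∃ i j k : α, p < i ∧ i < j ∧ j < k ∧ f j < f i ∧ f i < f k

variable {f : α → β} {p q : α}

theorem Avoids132Before.anti (hq : Avoids132Before f q) (hpq : p ≤ q) : Avoids132Before f p :=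
  fun ⟨i, j, k, hij, hjk, hkp, hval⟩ ↦ hq ⟨i, j, k, hij, hjk, hkp.trans_le hpq, hval⟩

theorem Avoids213After.mono (hp : Avoids213After f p) (hpq : p ≤ q) : Avoids213After f q :=
  fun ⟨i, j, k, hqi, hrest⟩ ↦ hp ⟨i, j, k, hpq.trans_lt hqi, hrest⟩

end Patterns

namespace Avoids1324

variable {n : ℕ} {σ : Equiv.Perm (Fin n)} {p q : Fin n}

theorem avoids132Before_of_leftToRightMax (havoid : Avoids1324 σ) (hq : ∀ j < q, σ j < σ q) :
    Avoids132Before σ q :=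
  fun ⟨i, j, k, hij, hjk, hkq, hik, hkj⟩ ↦
    havoid ⟨i, j, k, q, hij, hjk, hkq, hik, hkj, hq j (hjk.trans hkq)⟩

theorem avoids213After_of_rightToLeftMin (havoid : Avoids1324 σ) (hp : ∀ j > p, σ p < σ j) :
    Avoids213After σ p :=
  fun ⟨i, j, k, hpi, hij, hjk, hji, hik⟩ ↦
    havoid ⟨p, i, j, k, hpi, hij, hjk, hp j (hpi.trans hij), hji, hik⟩

theorem avoids132Before_of_isTop (havoid : Avoids1324 σ) (hq : IsTop (σ q)) :
    Avoids132Before σ q :=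
  havoid.avoids132Before_of_leftToRightMax fun j hj ↦ (hq (σ j)).lt_of_ne (σ.injective.ne hj.ne)

theorem avoids213After_of_isBot (havoid : Avoids1324 σ) (hp : IsBot (σ p)) :
    Avoids213After σ p :=
  havoid.avoids213After_of_rightToLeftMin fun j hj ↦ (hp (σ j)).lt_of_ne (σ.injective.ne hj.ne)

end Avoids1324

theorem stmt_0_general (n : ℕ) (hn : 0 < n) (σ : Equiv.Perm (Fin n)) (havoid : Avoids1324 σ) :
    Avoids132Before σ (σ.symm ⟨n - 1, by omega⟩) ∧ Avoids213After σ (σ.symm ⟨0, hn⟩) := by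
  constructor
  · apply havoid.avoids132Before_of_isTop
    rw [σ.apply_symm_apply]
    exact fun v ↦ Nat.le_sub_one_of_lt v.isLt
  · apply havoid.avoids213After_of_isBot
    rw [σ.apply_symm_apply]
    exact fun v ↦ Nat.zero_le v

/-- if `σ` avoids 1324 and the entry `n` is immediately to the right of the
entry `1` (position of `n` = position of `1` + 1), then the prefix before the `1`
avoids 132 and the suffix after the `n` avoids 213. -/
theorem stmt_0 (n : ℕ) (hn : 2 ≤ n) (σ : Equiv.Perm (Fin n))
    (havoid : Avoids1324 σ)
    (hadj : ((σ.symm ⟨n - 1, by omega⟩ : Fin n) : ℕ) =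
      ((σ.symm ⟨0, by omega⟩ : Fin n) : ℕ) + 1) :
    (¬ ∃ i j k : Fin n, i < j ∧ j < k ∧ k < σ.symm ⟨0, by omega⟩ ∧
        σ i < σ k ∧ σ k < σ j) ∧
    (¬ ∃ i j k : Fin n, σ.symm ⟨n - 1, by omega⟩ < i ∧ i < j ∧ j < k ∧
        σ j < σ i ∧ σ i < σ k) := by
  have hpos : σ.symm ⟨0, by omega⟩ ≤ σ.symm ⟨n - 1, by omega⟩ := Fin.le_def.2 (by omega)
  exact (stmt_0_general n (by omega) σ havoid).imp (·.anti hpos) (·.mono hpos)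
end

section
/- For every n ≥ 2, the number of permutations σ of {1,…,n} avoiding 1324 with σ⁻¹(n) = σ⁻¹(1) + 1 equals the number of pairs (ρ, m), where ρ is a permutation of {1,…,n−2} avoiding 1324, 0 ≤ m ≤ n−2, the subsequence of ρ consisting of the entries with values ≤ m avoids the pattern 132 (no positions i < j < k with ρ(i), ρ(j), ρ(k) ≤ m and ρ(i) < ρ(k) < ρ(j)), and the subsequence of ρ consisting of the entries with values > m avoids the pattern 213 (no positions i < j < k with ρ(i), ρ(j), ρ(k) > m and ρ(j) < ρ(i) < ρ(k)). (Such pairs (ρ, m) are the 1324-avoiding vertical dominoes with n−2 points.) -/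
/-!
The pattern 1324 is an involution, so `σ` may be replaced by `τ = σ⁻¹`; the condition that `n`
immediately follows `1` becomes `τ(n) = τ(1) + 1`. Deleting the first and the last entry of `τ`
leaves a permutation `ρ` of `{1,…,n-2}`, and `τ` is recovered from `ρ` and `m = τ(1) - 1`. An
occurrence of 1324 in `τ` that is not already one in `ρ` uses the last entry as its `4`, which means
a 132 among the values `≤ m` of `ρ`, or the first entry as its `1`, which means a 213 among the
values `> m`. It cannot use both, since no value lies strictly between `τ(1)` and `τ(n)`.
-/

open Equiv (Perm)

/-- The permutation whose diagram is obtained from that of `ρ` by inserting a new point in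
column `p` and row `q`. -/
def insertPoint {n : ℕ} (p q : Fin (n + 1)) (ρ : Perm (Fin n)) : Perm (Fin (n + 1)) :=
  (finSuccEquiv' p).trans (ρ.optionCongr.trans (finSuccEquiv' q).symm)

section InsertPoint

variable {n : ℕ} (p q : Fin (n + 1)) (ρ : Perm (Fin n))

theorem insertPoint_apply_self : insertPoint p q ρ p = q := by
  simp [insertPoint]

theorem insertPoint_apply_succAbove (i : Fin n) :
    insertPoint p q ρ (p.succAbove i) = q.succAbove (ρ i) := by
  simp [insertPoint]

theorem insertPoint_injective : Function.Injective (insertPoint p q) := fun ρ ρ' h => by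
  ext1 i
  apply Fin.succAbove_right_injective (p := q)
  rw [← insertPoint_apply_succAbove p, h, insertPoint_apply_succAbove]

variable {p q} in
theorem exists_insertPoint_eq {τ : Perm (Fin (n + 1))} (h : τ p = q) :
    ∃ ρ, insertPoint p q ρ = τ := by
  let e : Perm (Option (Fin n)) := (finSuccEquiv' p).symm.trans (τ.trans (finSuccEquiv' q))
  have e_none : e none = none := by simp [e, h]
  have optionCongr_eq : e.removeNone.optionCongr = e := by
    rw [map_equiv_removeNone, e_none, Equiv.swap_self]
    rfl
  refine ⟨e.removeNone, ?_⟩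
  rw [insertPoint, optionCongr_eq]
  ext1 x
  simp [e]

end InsertPoint

/-- The permutation obtained from `ρ` by adding a new first entry and a new last entry whose values
are the consecutive numbers `m` and `m + 1`; the values `≥ m` of `ρ` are shifted up by two. -/
def insertEnds {n : ℕ} (m : Fin (n + 1)) (ρ : Perm (Fin n)) : Perm (Fin (n + 2)) :=
  insertPoint (Fin.last (n + 1)) m.succ (insertPoint 0 m ρ)

section InsertEnds

variable {n : ℕ} (m : Fin (n + 1)) (ρ : Perm (Fin n))

theorem insertEnds_zero : insertEnds m ρ 0 = m.castSucc := by
  simpa [insertEnds, insertPoint_apply_self] using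
    insertPoint_apply_succAbove (Fin.last (n + 1)) m.succ (insertPoint 0 m ρ) 0

theorem insertEnds_last : insertEnds m ρ (Fin.last (n + 1)) = m.succ :=
  insertPoint_apply_self _ _ _

theorem insertEnds_succ_castSucc (i : Fin n) :
    insertEnds m ρ i.succ.castSucc = m.succ.succAbove (m.succAbove (ρ i)) := by
  rw [insertEnds, ← Fin.succAbove_last_apply, insertPoint_apply_succAbove,
    ← Fin.succAbove_zero_apply i, insertPoint_apply_succAbove]

theorem insertEnds_injective :
    Function.Injective fun p : Perm (Fin n) × Fin (n + 1) => insertEnds p.2 p.1 := by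
  rintro ⟨ρ, m⟩ ⟨ρ', m'⟩ (h : insertEnds m ρ = insertEnds m' ρ')
  obtain rfl : m = m' := by
    rw [← Fin.succ_inj, ← insertEnds_last m ρ, h, insertEnds_last]
  rw [insertPoint_injective _ _ (insertPoint_injective _ _ h)]

theorem exists_insertEnds_eq {τ : Perm (Fin (n + 2))}
    (h : (τ (Fin.last (n + 1)) : ℕ) = (τ 0 : ℕ) + 1) : ∃ m ρ, insertEnds m ρ = τ := by
  have zero_ne_last : τ 0 ≠ Fin.last (n + 1) := by grind
  obtain ⟨m, hm⟩ := Fin.exists_castSucc_eq.2 zero_ne_last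
  have hlast : τ (Fin.last (n + 1)) = m.succ := by ext; simp [h, ← hm]
  obtain ⟨τ', rfl⟩ := exists_insertPoint_eq hlast
  have hzero : τ' 0 = m := by
    apply Fin.succAbove_right_injective (p := m.succ)
    rw [Fin.succAbove_succ_self, hm, ← insertPoint_apply_succAbove (Fin.last (n + 1))]
    simp
  obtain ⟨ρ, rfl⟩ := exists_insertPoint_eq hzero
  exact ⟨m, ρ, rfl⟩

theorem insertEnds_lt_insertEnds_iff {i j : Fin n} :
    insertEnds m ρ i.succ.castSucc < insertEnds m ρ j.succ.castSucc ↔ ρ i < ρ j := by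
  simp only [insertEnds_succ_castSucc, Fin.succAbove_lt_succAbove_iff]

theorem insertEnds_zero_lt_iff {i : Fin n} :
    insertEnds m ρ 0 < insertEnds m ρ i.succ.castSucc ↔ (m : ℕ) ≤ ρ i := by
  rw [insertEnds_zero, insertEnds_succ_castSucc, ← Fin.succAbove_succ_self,
    Fin.succAbove_lt_succAbove_iff, Fin.lt_succAbove_iff_le_castSucc]
  rfl

theorem insertEnds_lt_last_iff {i : Fin n} :
    insertEnds m ρ i.succ.castSucc < insertEnds m ρ (Fin.last (n + 1)) ↔ (ρ i : ℕ) < m := by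
  rw [insertEnds_last, insertEnds_succ_castSucc, Fin.succAbove_lt_iff_succ_le, Fin.succ_le_succ_iff,
    (Fin.succAbove_ne m (ρ i)).le_iff_lt, Fin.succAbove_lt_iff_castSucc_lt]
  rfl

end InsertEnds

theorem exists_fin_iff_ends {n : ℕ} {P : Fin (n + 2) → Prop} :
    (∃ i, P i) ↔ P 0 ∨ (∃ i : Fin n, P i.succ.castSucc) ∨ P (Fin.last (n + 1)) := by
  rw [Fin.exists_fin_succ', Fin.exists_fin_succ, or_assoc]
  rfl

theorem exists_lt_lt_lt_iff_ends {n : ℕ}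
    {P : Fin (n + 2) → Fin (n + 2) → Fin (n + 2) → Fin (n + 2) → Prop} :
    (∃ i j k l, i < j ∧ j < k ∧ k < l ∧ P i j k l) ↔
      (∃ i j k l : Fin n, i < j ∧ j < k ∧ k < l ∧
        P i.succ.castSucc j.succ.castSucc k.succ.castSucc l.succ.castSucc) ∨
      (∃ i j k : Fin n, i < j ∧ j < k ∧
        P i.succ.castSucc j.succ.castSucc k.succ.castSucc (Fin.last (n + 1))) ∨
      (∃ i j k : Fin n, i < j ∧ j < k ∧
        P 0 i.succ.castSucc j.succ.castSucc k.succ.castSucc) ∨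
      ∃ i j : Fin n, i < j ∧ P 0 i.succ.castSucc j.succ.castSucc (Fin.last (n + 1)) := by
  have zero_lt (i : Fin n) : 0 < i.succ.castSucc := Fin.castSucc_pos i.succ_pos
  have lt_last (i : Fin n) : i.succ.castSucc < Fin.last (n + 1) := Fin.castSucc_lt_last _
  have not_last_lt (i : Fin (n + 2)) : ¬ Fin.last (n + 1) < i := i.le_last.not_gt
  simp only [exists_fin_iff_ends, Fin.not_lt_zero, not_last_lt, zero_lt, lt_last,
    Fin.castSucc_lt_castSucc_iff, Fin.succ_lt_succ_iff, true_and, false_and, and_false,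
    exists_false, false_or, or_false, exists_or]
  exact iff_of_eq (by ac_rfl)

theorem Avoids1324.symm {n : ℕ} {σ : Perm (Fin n)} (h : Avoids1324 σ) : Avoids1324 σ.symm := by
  rintro ⟨i, j, k, l, hij, hjk, hkl, hik', hkj', hjl'⟩
  exact h ⟨σ.symm i, σ.symm k, σ.symm j, σ.symm l, hik', hkj', hjl', by simpa, by simpa, by simpa⟩

/-- `(ρ, m)` is a 1324-avoiding vertical domino: the dividing line runs just above the `m` lowest
points of `ρ`, which are those of value `< m` since values are 0-based. -/
def IsVerticalDomino {n : ℕ} (ρ : Perm (Fin n)) (m : ℕ) : Prop :=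
  Avoids1324 ρ ∧
    (¬ ∃ i j k : Fin n, i < j ∧ j < k ∧
      (ρ i : ℕ) < m ∧ (ρ j : ℕ) < m ∧ (ρ k : ℕ) < m ∧ ρ i < ρ k ∧ ρ k < ρ j) ∧
    ¬ ∃ i j k : Fin n, i < j ∧ j < k ∧
      m ≤ (ρ i : ℕ) ∧ m ≤ (ρ j : ℕ) ∧ m ≤ (ρ k : ℕ) ∧ ρ j < ρ i ∧ ρ i < ρ k

theorem avoids1324_insertEnds_iff {n : ℕ} {m : Fin (n + 1)} {ρ : Perm (Fin n)} :
    Avoids1324 (insertEnds m ρ) ↔ IsVerticalDomino ρ m := by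
  have below (i j k : Fin n) : (ρ i < ρ k ∧ ρ k < ρ j ∧ (ρ j : ℕ) < m) ↔
      (ρ i : ℕ) < m ∧ (ρ j : ℕ) < m ∧ (ρ k : ℕ) < m ∧ ρ i < ρ k ∧ ρ k < ρ j := by
    simp only [Fin.lt_def]
    omega
  have above (i j k : Fin n) : ((m : ℕ) ≤ ρ j ∧ ρ j < ρ i ∧ ρ i < ρ k) ↔
      (m : ℕ) ≤ ρ i ∧ (m : ℕ) ≤ ρ j ∧ (m : ℕ) ≤ ρ k ∧ ρ j < ρ i ∧ ρ i < ρ k := by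
    simp only [Fin.lt_def]
    omega
  have not_between : ¬ ∃ i j : Fin n, i < j ∧ (m : ℕ) ≤ ρ j ∧ ρ j < ρ i ∧ (ρ i : ℕ) < m := by
    simp only [Fin.lt_def]
    omega
  simp only [Avoids1324, IsVerticalDomino, exists_lt_lt_lt_iff_ends, insertEnds_lt_insertEnds_iff,
    insertEnds_zero_lt_iff, insertEnds_lt_last_iff, not_or, below, above, not_between,
    not_false_eq_true, and_true]

theorem image_insertEnds_symm (n : ℕ) :
    (fun p : Perm (Fin n) × Fin (n + 1) => (insertEnds p.2 p.1).symm) ''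
        {p | IsVerticalDomino p.1 p.2} =
      {σ : Perm (Fin (n + 2)) | Avoids1324 σ ∧
        (σ.symm (Fin.last (n + 1)) : ℕ) = (σ.symm 0 : ℕ) + 1} := by
  ext σ
  constructor
  · rintro ⟨⟨ρ, m⟩, hρ, rfl⟩
    exact ⟨(avoids1324_insertEnds_iff.2 hρ).symm, by simp [insertEnds_zero, insertEnds_last]⟩
  · rintro ⟨hσ, hadj⟩
    obtain ⟨m, ρ, h⟩ := exists_insertEnds_eq hadj
    refine ⟨(ρ, m), avoids1324_insertEnds_iff.1 (h ▸ hσ.symm), ?_⟩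
    simp [h]

theorem ncard_setOf_le_and {α : Type*} {n : ℕ} {P : α → ℕ → Prop} :
    {p : α × ℕ | p.2 ≤ n ∧ P p.1 p.2}.ncard = {p : α × Fin (n + 1) | P p.1 p.2}.ncard := by
  rw [← Set.ncard_image_of_injective _ (Function.injective_id.prodMap Fin.val_injective)]
  congr 1
  ext ⟨a, m⟩
  simp [Fin.exists_iff, and_comm]

/-- for `n ≥ 2`, the 1324-avoiding permutations of `{1,…,n}` with the `n`
immediately to the right of the `1` are equinumerous with 1324-avoiding vertical
dominoes with `n - 2` points, i.e. pairs `(ρ, m)` where `ρ` is a 1324-avoiding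
permutation of `{1,…,n-2}`, `0 ≤ m ≤ n-2`, the entries of `ρ` with values `≤ m`
avoid 132, and the entries of `ρ` with values `> m` avoid 213. -/
theorem stmt_1 (n : ℕ) (hn : 2 ≤ n) :
    {σ : Equiv.Perm (Fin n) | Avoids1324 σ ∧
      ((σ.symm ⟨n - 1, by omega⟩ : Fin n) : ℕ) =
        ((σ.symm ⟨0, by omega⟩ : Fin n) : ℕ) + 1}.ncard =
    {p : Equiv.Perm (Fin (n - 2)) × ℕ | p.2 ≤ n - 2 ∧ Avoids1324 p.1 ∧
      (¬ ∃ i j k : Fin (n - 2), i < j ∧ j < k ∧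
        (p.1 i : ℕ) < p.2 ∧ (p.1 j : ℕ) < p.2 ∧ (p.1 k : ℕ) < p.2 ∧
        p.1 i < p.1 k ∧ p.1 k < p.1 j) ∧
      (¬ ∃ i j k : Fin (n - 2), i < j ∧ j < k ∧
        p.2 ≤ (p.1 i : ℕ) ∧ p.2 ≤ (p.1 j : ℕ) ∧ p.2 ≤ (p.1 k : ℕ) ∧
        p.1 j < p.1 i ∧ p.1 i < p.1 k)}.ncard := by
  obtain ⟨N, rfl⟩ := Nat.exists_eq_add_of_le' hn
  calc
    _ = ((fun p : Perm (Fin N) × Fin (N + 1) => (insertEnds p.2 p.1).symm) ''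
        {p | IsVerticalDomino p.1 p.2}).ncard := congrArg Set.ncard (image_insertEnds_symm N).symm
    _ = {p : Perm (Fin N) × Fin (N + 1) | IsVerticalDomino p.1 p.2}.ncard :=
      Set.ncard_image_of_injective _ (Equiv.symm_bijective.injective.comp insertEnds_injective)
    _ = _ := ncard_setOf_le_and.symm
end

section
/- For every n ≥ 2, let a_{n,1} denote the number of permutations σ of {1,…,n} avoiding 1324 with σ⁻¹(n) = σ⁻¹(1) + 1. Then n! · (2n−1)! · a_{n,1} = 2 · (3n−3)!. -/
/-- The set `S_{n,k}^{a ≺ n}(1324)`: 1324-avoiding permutations with the entry `a`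
exactly `k` places to the left of the entry `n`, and the entries `1, …, a-1` all to
the right of `n`.  (Values are 0-based: the entry `a` is `⟨a-1, _⟩`.) -/
def SPerm (n a k : ℕ) : Set (Equiv.Perm (Fin n)) :=
  {σ | Avoids1324 σ ∧ ∃ hn : n - 1 < n, ∃ ha : a - 1 < n,
    ((σ.symm ⟨n - 1, hn⟩ : Fin n) : ℕ) = ((σ.symm ⟨a - 1, ha⟩ : Fin n) : ℕ) + k ∧
    ∀ b : Fin n, (b : ℕ) + 1 < a → σ.symm ⟨n - 1, hn⟩ < σ.symm b}

/-!
Let `1` and `n` be adjacent in this order in a permutation of `{1, …, n}`. The entries `L` before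
them and `R` after them form a domino: the permutation avoids 1324 if and only if `L` avoids 132,
`R` avoids 213, and no occurrence of 1324 has two entries in `L` and two in `R`.

Count dominoes by size, marked by `t`, and by the number of right-to-left maxima of `L`, marked
by `u`. If the greatest entry is in `L`, removing it gives a smaller domino, and the places where it
can be put back correspond to the right-to-left maxima. Otherwise, if there is an entry at all, the
first entry of `R` cuts the domino into a lower domino and an upper one that is empty or has its
greatest entry in `R`. So the generating functions `Y(u)` of all dominoes and `E(u)` of those whose
greatest entry is not in `L` satisfy `E = 1 + t Y E` and `(1 - u) (Y - E) = t u (Y(1) - u Y)`.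

Eliminating `E` gives a quadratic equation for `y = 1 - t Y`. Modulo its derivative `W` in `y`, its
derivative in `u` vanishes too, so the quadratic has a double root there; this forces `u = A` and
`t (t Y(1) - (1 - A) (A - 2)) = 0`, where `A = 1 + t A ^ 3`. The left side of the last equation does
not involve `u`, and its divisor `W` is `1 - u` at `t = 0`, so the equation holds outright. The
coefficients of the powers of `A` are Raney numbers.
-/

section Patterns

variable {α β : Type*} [LinearOrder α] [LinearOrder β]

/-- No `a < b < c` occur in the list in the order `a, c, b`. -/
def Avoids132 (l : List α) : Prop := l.Triplewise fun a c b ↦ ¬(a < b ∧ b < c)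

/-- No `a < b < c` occur in the list in the order `b, a, c`. -/
def Avoids213 (l : List α) : Prop := l.Triplewise fun b a c ↦ ¬(a < b ∧ b < c)

/-- `A ++ B` has no occurrence of 1324 with two entries in `A` and two in `B`. -/
def AvoidsSplit1324 (A B : List α) : Prop :=
  A.Pairwise fun a c ↦ B.Pairwise fun b d ↦ ¬(a < b ∧ b < c ∧ c < d)

theorem avoids132_map {f : α → β} (hf : StrictMono f) {l : List α} :
    Avoids132 (l.map f) ↔ Avoids132 l := by
  simp only [Avoids132, List.triplewise_map, hf.lt_iff_lt]

theorem avoids213_map {f : α → β} (hf : StrictMono f) {l : List α} :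
    Avoids213 (l.map f) ↔ Avoids213 l := by
  simp only [Avoids213, List.triplewise_map, hf.lt_iff_lt]

theorem avoidsSplit1324_map {f : α → β} (hf : StrictMono f) {A B : List α} :
    AvoidsSplit1324 (A.map f) (B.map f) ↔ AvoidsSplit1324 A B := by
  simp only [AvoidsSplit1324, List.pairwise_map, hf.lt_iff_lt]

theorem avoids132_append {X Y : List α} (h : ∀ x ∈ X, ∀ y ∈ Y, y < x) :
    Avoids132 (X ++ Y) ↔ Avoids132 X ∧ Avoids132 Y := by
  simp only [Avoids132, List.triplewise_append, List.pairwise_iff_forall_sublist]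
  grind

theorem avoids213_append {X Y : List α} (h : ∀ x ∈ X, ∀ y ∈ Y, y < x) :
    Avoids213 (X ++ Y) ↔ Avoids213 X ∧ Avoids213 Y := by
  simp only [Avoids213, List.triplewise_append, List.pairwise_iff_forall_sublist]
  grind

theorem avoids213_cons {r : α} {X Y : List α} (hX : ∀ x ∈ X, r < x) (hY : ∀ y ∈ Y, y < r) :
    Avoids213 (r :: (X ++ Y)) ↔ Avoids213 X ∧ Avoids213 Y := by
  rw [← avoids213_append fun x hx y hy ↦ (hY y hy).trans (hX x hx), Avoids213,
    List.triplewise_cons, ← Avoids213, and_iff_right_iff_imp, List.pairwise_append]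
  simp only [List.pairwise_iff_forall_sublist]
  grind

theorem avoids132_insert_max {X Y : List α} {m : α} (hm : ∀ x ∈ X ++ Y, x < m) :
    Avoids132 (X ++ m :: Y) ↔ Avoids132 (X ++ Y) ∧ ∀ x ∈ X, ∀ y ∈ Y, y ≤ x := by
  have hX (a) (ha : a ∈ X) : ¬ m < a := (hm a (by grind)).not_gt
  have hY : Y.Pairwise fun c b ↦ ¬(m < b ∧ b < c) :=
    List.pairwise_iff_forall_sublist.2 fun h ↦ by grind
  have hX : X.Pairwise fun a c ↦ ¬(a < m ∧ m < c) :=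
    List.pairwise_iff_forall_sublist.2 fun h ↦ by grind
  simp only [Avoids132, List.triplewise_append, List.triplewise_cons, List.pairwise_cons,
    List.forall_mem_cons]
  grind

theorem avoidsSplit1324_insert_max {X Y B : List α} {m : α} (hm : ∀ x ∈ B, x < m) :
    AvoidsSplit1324 (X ++ m :: Y) B ↔ AvoidsSplit1324 (X ++ Y) B := by
  have from_max (c : α) : B.Pairwise fun b d ↦ ¬(m < b ∧ b < c ∧ c < d) :=
    List.pairwise_iff_forall_sublist.2 fun h ↦ by grind
  have to_max (a : α) : B.Pairwise fun b d ↦ ¬(a < b ∧ b < m ∧ m < d) :=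
    List.pairwise_iff_forall_sublist.2 fun h ↦ by grind
  simp only [AvoidsSplit1324, List.pairwise_append, List.pairwise_cons, List.forall_mem_cons,
    from_max, to_max, implies_true, true_and]

theorem avoidsSplit1324_stack {r : α} {X X' Y Y' : List α}
    (hX : ∀ x ∈ X ++ X', r < x) (hY : ∀ y ∈ Y ++ Y', y < r) :
    AvoidsSplit1324 (X ++ Y) (r :: (X' ++ Y')) ↔ AvoidsSplit1324 X X' ∧ AvoidsSplit1324 Y Y' := by
  rw [List.forall_mem_append] at hX hY
  have hXY : ∀ a ∈ X, ∀ c ∈ Y,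
      (r :: (X' ++ Y')).Pairwise fun b d ↦ ¬(a < b ∧ b < c ∧ c < d) := fun a ha c hc ↦
    List.pairwise_iff_forall_sublist.2 fun _ ↦ by grind
  have hYY {a c} (_ : a ∈ Y) (hc : c ∈ Y) :
      ((r :: (X' ++ Y')).Pairwise fun b d ↦ ¬(a < b ∧ b < c ∧ c < d)) ↔
        Y'.Pairwise fun b d ↦ ¬(a < b ∧ b < c ∧ c < d) := by
    have hX' : X'.Pairwise fun b d ↦ ¬(a < b ∧ b < c ∧ c < d) :=
      List.pairwise_iff_forall_sublist.2 fun _ ↦ by grind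
    have hc : c < r := hY.1 c hc
    rw [List.pairwise_cons, List.pairwise_append, and_iff_right (by grind), and_iff_right hX',
      and_iff_left (by grind)]
  have hXX {a c} (ha : a ∈ X) (hc : c ∈ X) :
      ((r :: (X' ++ Y')).Pairwise fun b d ↦ ¬(a < b ∧ b < c ∧ c < d)) ↔
        X'.Pairwise fun b d ↦ ¬(a < b ∧ b < c ∧ c < d) := by
    have hY' : Y'.Pairwise fun b d ↦ ¬(a < b ∧ b < c ∧ c < d) :=
      List.pairwise_iff_forall_sublist.2 fun _ ↦ by grind
    have ha : r < a := hX.1 a ha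
    have hc : r < c := hX.1 c hc
    rw [List.pairwise_cons, List.pairwise_append, and_iff_right (by grind), and_iff_left (by grind)]
  rw [AvoidsSplit1324, List.pairwise_append, List.Pairwise.iff_of_mem hXX,
    List.Pairwise.iff_of_mem hYY, and_iff_left hXY, AvoidsSplit1324, AvoidsSplit1324]

end Patterns

section RightToLeftMaxima

variable {α β : Type*} [LinearOrder α] [LinearOrder β]

/-- The number of right-to-left maxima of a list, that is, of entries greater than all entries
to their right. -/
def rlMaxima : List α → ℕ
  | [] => 0
  | a :: l => if ∀ x ∈ l, x < a then rlMaxima l + 1 else rlMaxima l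

theorem rlMaxima_map {f : α → β} (hf : StrictMono f) (l : List α) :
    rlMaxima (l.map f) = rlMaxima l := by
  induction l with
  | nil => rfl
  | cons a l ih => simp only [List.map_cons, rlMaxima, List.forall_mem_map, hf.lt_iff_lt, ih]

theorem rlMaxima_append {X Y : List α} (h : ∀ x ∈ X, ∀ y ∈ Y, y < x) :
    rlMaxima (X ++ Y) = rlMaxima X + rlMaxima Y := by
  induction X with
  | nil => simp [rlMaxima]
  | cons a X ih =>
    rw [List.forall_mem_cons] at h
    have : (∀ x ∈ X ++ Y, x < a) ↔ ∀ x ∈ X, x < a := by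
      rw [List.forall_mem_append, and_iff_left h.1]
    simp only [List.cons_append, rlMaxima, this, ih h.2]
    split_ifs <;> lia

theorem rlMaxima_insert_max {X Y : List α} {m : α} (hm : ∀ x ∈ X ++ Y, x < m) :
    rlMaxima (X ++ m :: Y) = rlMaxima Y + 1 := by
  induction X with
  | nil => exact if_pos hm
  | cons a X ih =>
    rw [List.cons_append, List.forall_mem_cons] at hm
    rw [List.cons_append, rlMaxima, if_neg, ih hm.2]
    exact fun h ↦ (h m (by simp)).not_gt hm.1

/-- The positions at which a new maximum can be inserted without creating a 132. -/
def cutPositions (l : List α) : Finset ℕ :=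
  {i ∈ Finset.range (l.length + 1) | ∀ x ∈ l.take i, ∀ y ∈ l.drop i, y ≤ x}

theorem zero_mem_cutPositions (l : List α) : 0 ∈ cutPositions l := by simp [cutPositions]

theorem sum_cutPositions_cons {M : Type*} [AddCommMonoid M] (a : α) (l : List α) (f : ℕ → M) :
    ∑ i ∈ cutPositions (a :: l), f i =
      (∑ i ∈ cutPositions l with ∀ y ∈ l.drop i, y ≤ a, f (i + 1)) + f 0 := by
  have succ_cut (i : ℕ) : (∀ x ∈ (a :: l).take (i + 1), ∀ y ∈ (a :: l).drop (i + 1), y ≤ x) ↔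
      (∀ x ∈ l.take i, ∀ y ∈ l.drop i, y ≤ x) ∧ ∀ y ∈ l.drop i, y ≤ a := by
    rw [List.take_succ_cons, List.drop_succ_cons, List.forall_mem_cons, and_comm]
  rw [cutPositions, List.length_cons, Finset.sum_filter, Finset.sum_range_succ',
    ← Finset.sum_filter, if_pos (by simp), cutPositions, Finset.filter_filter]
  simp only [succ_cut]

theorem le_of_mem_drop_of_mem_cutPositions {a c y : α} {l : List α} {i : ℕ}
    (hal : Avoids132 (a :: l)) (hl : l.Nodup) (hc : c ∈ l) (hac : a < c)
    (hi : i ∈ cutPositions l) (hi₀ : i ≠ 0) (hy : y ∈ l.drop i) : y ≤ a := by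
  obtain ⟨hil, hcut⟩ := Finset.mem_filter.1 hi
  obtain ⟨e, he, hae⟩ : ∃ e ∈ l.take i, a < e := by
    rw [← List.take_append_drop i l, List.mem_append] at hc
    rcases hc with hc | hc
    · exact ⟨c, hc, hac⟩
    · obtain ⟨e, he⟩ := List.exists_mem_of_ne_nil (l.take i)
        (by simp [List.take_eq_nil_iff, hi₀, List.ne_nil_of_mem (List.mem_of_mem_drop hc)])
      exact ⟨e, he, hac.trans_le (hcut e he c hc)⟩
  rw [← List.take_append_drop i l] at hal hl
  have hye : y ≠ e := fun h ↦ List.disjoint_of_nodup_append hl he (h ▸ hy)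
  have no_132 := (List.pairwise_append.1 (List.triplewise_cons.1 hal).1).2.2 e he y hy
  exact not_lt.1 fun hay ↦ no_132 ⟨hay, (hcut e he y hy).lt_of_ne hye⟩

theorem sum_cutPositions {M : Type*} [AddCommMonoid M] {l : List α} (hl : Avoids132 l)
    (hn : l.Nodup) (f : ℕ → M) :
    ∑ i ∈ cutPositions l, f (rlMaxima (l.drop i)) = ∑ s ∈ Finset.range (rlMaxima l + 1), f s := by
  induction l with
  | nil => simp [cutPositions, rlMaxima]
  | cons a l ih =>
    rw [List.nodup_cons] at hn
    have ih := ih (List.triplewise_cons.1 hl).2 hn.2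
    rw [sum_cutPositions_cons, List.drop_zero]
    simp only [List.drop_succ_cons]
    by_cases ha : ∀ x ∈ l, x < a
    · rw [Finset.filter_true_of_mem fun i _ y hy ↦ (ha y (List.mem_of_mem_drop hy)).le, ih,
        rlMaxima, if_pos ha, Finset.sum_range_succ _ (_ + 1)]
    · have cuts : {i ∈ cutPositions l | ∀ y ∈ l.drop i, y ≤ a} = (cutPositions l).erase 0 := by
        obtain ⟨c, hc, hac⟩ : ∃ c ∈ l, a < c := by grind
        ext i
        rw [Finset.mem_filter, Finset.mem_erase, and_comm, and_congr_left_iff]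
        refine fun hi ↦ ⟨?_, fun h₀ y hy ↦
          le_of_mem_drop_of_mem_cutPositions hl hn.2 hc hac hi h₀ hy⟩
        rintro h rfl
        exact (h c hc).not_gt hac
      rw [cuts, rlMaxima, if_neg ha, ← ih, ← Finset.sum_erase_add _ _ (zero_mem_cutPositions l),
        List.drop_zero]

end RightToLeftMaxima

section Filter

variable {α : Type*} {p : α → Prop} [DecidablePred p] {X X' Y Y' l : List α}

theorem filter_append_eq_left (hX : ∀ x ∈ X, p x) (hY : ∀ y ∈ Y, ¬p y) : (X ++ Y).filter p = X := by
  rw [List.filter_append, List.filter_eq_self.2 (by simpa using hX),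
    List.filter_eq_nil_iff.2 (by simpa using hY), List.append_nil]

theorem filter_not_append_eq_right (hX : ∀ x ∈ X, p x) (hY : ∀ y ∈ Y, ¬p y) :
    (X ++ Y).filter (¬p ·) = Y := by
  rw [List.filter_append, List.filter_eq_nil_iff.2 (by simpa using hX),
    List.filter_eq_self.2 (by simpa using hY), List.nil_append]

theorem filter_append_filter_not (h : l.Pairwise fun a b ↦ p b → p a) :
    l.filter p ++ l.filter (¬p ·) = l := by
  induction l with
  | nil => rfl
  | cons a l ih =>
    rw [List.pairwise_cons] at h
    by_cases ha : p a
    · simpa [ha] using ih h.2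
    · have hl : ∀ b ∈ l, ¬p b := fun b hb hpb ↦ ha (h.1 b hb hpb)
      exact congr_arg₂ _ (List.filter_eq_nil_iff.2 (by simpa [ha] using hl))
        (List.filter_eq_self.2 (by simpa [ha] using hl))

theorem append_perm_append_iff (p : α → Prop)
    (hX : ∀ x ∈ X, p x) (hX' : ∀ x ∈ X', p x) (hY : ∀ y ∈ Y, ¬p y) (hY' : ∀ y ∈ Y', ¬p y) :
    (X ++ Y).Perm (X' ++ Y') ↔ X.Perm X' ∧ Y.Perm Y' := by
  classical
  refine ⟨fun h ↦ ⟨?_, ?_⟩, fun h ↦ h.1.append h.2⟩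
  · simpa only [filter_append_eq_left hX hY, filter_append_eq_left hX' hY'] using h.filter p
  · simpa only [filter_not_append_eq_right hX hY, filter_not_append_eq_right hX' hY']
      using h.filter (¬p ·)

theorem append_eq_append_iff_of_forall (p : α → Prop)
    (hX : ∀ x ∈ X, p x) (hX' : ∀ x ∈ X', p x) (hY : ∀ y ∈ Y, ¬p y) (hY' : ∀ y ∈ Y', ¬p y) :
    X ++ Y = X' ++ Y' ↔ X = X' ∧ Y = Y' := by
  classical
  refine ⟨fun h ↦ ⟨?_, ?_⟩, fun h ↦ h.1 ▸ h.2 ▸ rfl⟩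
  · rw [← filter_append_eq_left hX hY, h, filter_append_eq_left hX' hY']
  · rw [← filter_not_append_eq_right hX hY, h, filter_not_append_eq_right hX' hY']

end Filter

section Dominoes

theorem perm_range_iff {l : List ℕ} {n : ℕ} :
    l.Perm (List.range n) ↔ l.Nodup ∧ ∀ x, x ∈ l ↔ x < n := by
  refine ⟨fun h ↦ ⟨h.nodup_iff.2 List.nodup_range, fun x ↦ by rw [h.mem_iff, List.mem_range]⟩,
    fun h ↦ (List.perm_ext_iff_of_nodup h.1 List.nodup_range).2 fun x ↦ ?_⟩
  rw [h.2, List.mem_range]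

/-- A domino of size `n`: an arrangement of `0, …, n - 1` into two lists such that the left one
avoids 132, the right one avoids 213, and no occurrence of 1324 has two entries in each list. -/
structure IsDomino (n : ℕ) (d : List ℕ × List ℕ) : Prop where
  perm : (d.1 ++ d.2).Perm (List.range n)
  left : Avoids132 d.1
  right : Avoids213 d.2
  split : AvoidsSplit1324 d.1 d.2

theorem finite_setOf_isDomino (n : ℕ) : {d | IsDomino n d}.Finite := by
  refine ((List.range n).permutations.finite_toSet.prod (Set.finite_Iic n)).image
    (fun p ↦ p.1.splitAt p.2) |>.subset fun d hd ↦ ⟨(d.1 ++ d.2, d.1.length), ⟨?_, ?_⟩, ?_⟩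
  · exact List.mem_permutations.2 hd.perm
  · have := hd.perm.length_eq
    rw [List.length_append, List.length_range] at this
    exact Set.mem_Iic.2 (by lia)
  · simp

/-- The finite set of dominoes of size `n`. -/
noncomputable def dominoes (n : ℕ) : Finset (List ℕ × List ℕ) := (finite_setOf_isDomino n).toFinset

theorem mem_dominoes {n : ℕ} {d : List ℕ × List ℕ} : d ∈ dominoes n ↔ IsDomino n d :=
  (finite_setOf_isDomino n).mem_toFinset

/-- A domino whose greatest entry, if any, is on the right. -/
def IsTopped (d : List ℕ × List ℕ) : Prop := ∀ x ∈ d.1, ∃ y ∈ d.2, x < y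

instance : DecidablePred IsTopped := fun d ↦
  inferInstanceAs (Decidable (∀ x ∈ d.1, ∃ y ∈ d.2, x < y))

/-- The disjoint union of two dominoes, the second one above the first one, with the entry `r`
between them put in front of the right list. -/
def stack (r : ℕ) (d₁ d₂ : List ℕ × List ℕ) : List ℕ × List ℕ :=
  (d₂.1.map (· + (r + 1)) ++ d₁.1, r :: (d₂.2.map (· + (r + 1)) ++ d₁.2))

theorem stack_perm_range_iff {i j : ℕ} {d₁ d₂ : List ℕ × List ℕ} (h : ∀ x ∈ d₁.1 ++ d₁.2, x < i) :
    ((stack i d₁ d₂).1 ++ (stack i d₁ d₂).2).Perm (List.range (i + j + 1)) ↔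
      (d₁.1 ++ d₁.2).Perm (List.range i) ∧ (d₂.1 ++ d₂.2).Perm (List.range j) := by
  have hl : ((stack i d₁ d₂).1 ++ (stack i d₁ d₂).2).Perm
      (i :: ((d₁.1 ++ d₁.2) ++ (d₂.1 ++ d₂.2).map (· + (i + 1)))) := by
    simp only [stack]
    grind
  have hr : (List.range (i + j + 1)).Perm
      (i :: (List.range i ++ (List.range j).map (· + (i + 1)))) := by
    rw [show i + j + 1 = i + 1 + j by lia, List.range_add, List.range_succ]
    grind
  have inj : Function.Injective (· + (i + 1)) := add_left_injective _
  rw [hl.congr_left, hr.congr_right, List.perm_cons,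
    append_perm_append_iff (· < i) h (by grind) (by grind) (by grind), List.map_perm_map_iff inj]

theorem isDomino_stack {i j : ℕ} {d₁ d₂ : List ℕ × List ℕ} (h : ∀ x ∈ d₁.1 ++ d₁.2, x < i) :
    IsDomino (i + j + 1) (stack i d₁ d₂) ↔ IsDomino i d₁ ∧ IsDomino j d₂ := by
  obtain ⟨h₁, h₂⟩ := List.forall_mem_append.1 h
  have shift : StrictMono (· + (i + 1)) := fun a b h ↦ by grind
  have lt_shift (l : List ℕ) : ∀ x ∈ l.map (· + (i + 1)), i < x := by grind
  have hl : Avoids132 (stack i d₁ d₂).1 ↔ _ :=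
    avoids132_append fun x hx y hy ↦ (h₁ y hy).trans (lt_shift _ x hx)
  have hr : Avoids213 (stack i d₁ d₂).2 ↔ _ := avoids213_cons (lt_shift _) h₂
  have hs : AvoidsSplit1324 (stack i d₁ d₂).1 (stack i d₁ d₂).2 ↔ _ :=
    avoidsSplit1324_stack (List.forall_mem_append.2 ⟨lt_shift _, lt_shift _⟩) h
  rw [avoids132_map shift] at hl
  rw [avoids213_map shift] at hr
  rw [avoidsSplit1324_map shift] at hs
  have hp := stack_perm_range_iff (j := j) (d₂ := d₂) h
  constructor
  · rintro ⟨p, l, r, s⟩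
    exact ⟨⟨(hp.1 p).1, (hl.1 l).2, (hr.1 r).2, (hs.1 s).2⟩,
      ⟨(hp.1 p).2, (hl.1 l).1, (hr.1 r).1, (hs.1 s).1⟩⟩
  · rintro ⟨⟨p₁, l₁, r₁, s₁⟩, ⟨p₂, l₂, r₂, s₂⟩⟩
    exact ⟨hp.2 ⟨p₁, p₂⟩, hl.2 ⟨l₂, l₁⟩, hr.2 ⟨r₂, r₁⟩, hs.2 ⟨s₂, s₁⟩⟩

theorem IsDomino.lt {n : ℕ} {d : List ℕ × List ℕ} (h : IsDomino n d) : ∀ x ∈ d.1 ++ d.2, x < n :=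
  fun x ↦ ((perm_range_iff.1 h.perm).2 x).1

theorem stack_injective {i i' : ℕ} {d₁ d₂ d₁' d₂' : List ℕ × List ℕ}
    (h₁ : ∀ x ∈ d₁.1 ++ d₁.2, x < i) (h₁' : ∀ x ∈ d₁'.1 ++ d₁'.2, x < i')
    (h : stack i d₁ d₂ = stack i' d₁' d₂') : i = i' ∧ d₁ = d₁' ∧ d₂ = d₂' := by
  rw [stack, stack, Prod.mk.injEq, List.cons.injEq] at h
  obtain ⟨hl, rfl, hr⟩ := h
  rw [List.forall_mem_append] at h₁ h₁'
  have inj : Function.Injective (· + (i + 1)) := add_left_injective _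
  have shift_not_lt (l : List ℕ) : ∀ x ∈ l.map (· + (i + 1)), ¬ x < i := by grind
  rw [append_eq_append_iff_of_forall (¬ · < i) (shift_not_lt _) (shift_not_lt _) (by grind)
    (by grind), (List.map_injective_iff.2 inj).eq_iff] at hl hr
  exact ⟨rfl, Prod.ext hl.2 hr.2, Prod.ext hl.1 hr.1⟩

theorem isTopped_stack {i : ℕ} {d₁ d₂ : List ℕ × List ℕ} (h : ∀ x ∈ d₁.1 ++ d₁.2, x < i) :
    IsTopped (stack i d₁ d₂) ↔ IsTopped d₂ := by
  rw [List.forall_mem_append] at h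
  have lower : ∀ x ∈ d₁.1, ∃ y ∈ (stack i d₁ d₂).2, x < y := fun x hx ↦
    ⟨i, List.mem_cons_self, h.1 x hx⟩
  have upper (x : ℕ) : (∃ y ∈ (stack i d₁ d₂).2, x + (i + 1) < y) ↔ ∃ y ∈ d₂.2, x < y := by
    refine ⟨?_, fun ⟨y, hy, hxy⟩ ↦
      ⟨y + (i + 1), by grind [stack], Nat.add_lt_add_right hxy _⟩⟩
    rintro ⟨y, hy, hxy⟩
    obtain ⟨z, hz, rfl⟩ : ∃ z ∈ d₂.2, z + (i + 1) = y := by grind [stack]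
    exact ⟨z, hz, by lia⟩
  have split : (∀ x ∈ (stack i d₁ d₂).1, ∃ y ∈ (stack i d₁ d₂).2, x < y) ↔ _ :=
    List.forall_mem_append
  rw [IsTopped, split, and_iff_left lower, List.forall_mem_map]
  simp only [upper, IsTopped]

theorem exists_stack_eq {n : ℕ} {d : List ℕ × List ℕ} (hd : IsDomino (n + 1) d) (ht : IsTopped d) :
    ∃ i d₁ d₂, (∀ x ∈ d₁.1 ++ d₁.2, x < i) ∧ stack i d₁ d₂ = d := by
  obtain ⟨A, _ | ⟨r, B⟩⟩ := d
  · have hA : A = [] := List.eq_nil_iff_forall_not_mem.2 fun x hx ↦ by simpa using ht x hx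
    simpa [hA] using hd.perm
  obtain ⟨hrA, hrB⟩ : r ∉ A ∧ r ∉ B := by
    have := (perm_range_iff.1 hd.perm).1
    grind
  have hA : A.Pairwise fun a c ↦ r < c → r < a := by
    refine hd.split.imp_of_mem fun {a c} ha hc no_1324 hrc ↦ ?_
    obtain ⟨e, he, hce⟩ := ht c hc
    have he : e ∈ B := (List.mem_cons.1 he).resolve_left (hrc.trans hce).ne'
    have := (List.pairwise_cons.1 no_1324).1 e he
    grind
  have hB : B.Pairwise fun a c ↦ r < c → r < a := by
    refine (List.triplewise_cons.1 hd.right).1.imp_of_mem fun ha _ h ↦ ?_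
    grind
  have unshift (l : List ℕ) :
      ((l.filter (r < ·)).map (· - (r + 1))).map (· + (r + 1)) = l.filter (r < ·) := by
    rw [List.map_map]
    exact (List.map_congr_left (g := id) (by grind)).trans (List.map_id _)
  refine ⟨r, (A.filter (¬ r < ·), B.filter (¬ r < ·)), ((A.filter (r < ·)).map (· - (r + 1)),
    (B.filter (r < ·)).map (· - (r + 1))), by grind, ?_⟩
  rw [stack, unshift, unshift, filter_append_filter_not hA, filter_append_filter_not hB]

end Dominoes

section Enumeration

open Polynomial

/-- The finite set of topped dominoes of size `n`. -/
noncomputable def toppedDominoes (n : ℕ) : Finset (List ℕ × List ℕ) := {d ∈ dominoes n | IsTopped d}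

theorem mem_toppedDominoes {n : ℕ} {d : List ℕ × List ℕ} :
    d ∈ toppedDominoes n ↔ IsDomino n d ∧ IsTopped d := by
  rw [toppedDominoes, Finset.mem_filter, mem_dominoes]

theorem sum_toppedDominoes_succ {M : Type*} [AddCommMonoid M] (n : ℕ) (f : List ℕ × List ℕ → M) :
    ∑ d ∈ toppedDominoes (n + 1), f d = ∑ p ∈ Finset.HasAntidiagonal.antidiagonal n,
      ∑ d₁ ∈ dominoes p.1, ∑ d₂ ∈ toppedDominoes p.2, f (stack p.1 d₁ d₂) := by
  simp only [← Finset.sum_product', Finset.sum_sigma']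
  refine (Finset.sum_nbij (fun x : (_ : ℕ × ℕ) × (List ℕ × List ℕ) × List ℕ × List ℕ ↦
    stack x.1.1 x.2.1 x.2.2) ?_ ?_ ?_ fun _ _ ↦ rfl).symm
  · rintro ⟨⟨i, j⟩, d₁, d₂⟩ h
    simp only [Finset.mem_sigma, Finset.HasAntidiagonal.mem_antidiagonal, Finset.mem_product,
      mem_dominoes, mem_toppedDominoes] at h ⊢
    obtain ⟨rfl, h₁, h₂, ht⟩ := h
    exact ⟨(isDomino_stack h₁.lt).2 ⟨h₁, h₂⟩, (isTopped_stack h₁.lt).2 ht⟩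
  · rintro ⟨⟨i, j⟩, d₁, d₂⟩ h ⟨⟨i', j'⟩, d₁', d₂'⟩ h' heq
    simp only [Finset.coe_sigma, Set.mem_sigma_iff, Finset.mem_coe,
      Finset.HasAntidiagonal.mem_antidiagonal, Finset.mem_product, mem_dominoes] at h h'
    obtain ⟨rfl, rfl, rfl⟩ := stack_injective h.2.1.lt h'.2.1.lt heq
    obtain rfl : j = j' := by lia
    rfl
  · intro d hd
    obtain ⟨hd, ht⟩ := mem_toppedDominoes.1 hd
    obtain ⟨i, d₁, d₂, h, rfl⟩ := exists_stack_eq hd ht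
    have hi : i < n + 1 := hd.lt i (List.mem_append_right _ List.mem_cons_self)
    obtain ⟨j, rfl⟩ := Nat.exists_eq_add_of_le (Nat.lt_succ_iff.1 hi)
    obtain ⟨h₁, h₂⟩ := (isDomino_stack h).1 hd
    refine ⟨⟨(i, j), d₁, d₂⟩, ?_, rfl⟩
    simpa [mem_dominoes, mem_toppedDominoes] using ⟨h₁, h₂, (isTopped_stack h).1 ht⟩

/-- The domino obtained from `d` by inserting `m` at position `i` of its left list. -/
def insertLeft (m : ℕ) (d : List ℕ × List ℕ) (i : ℕ) : List ℕ × List ℕ :=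
  (d.1.take i ++ m :: d.1.drop i, d.2)

theorem isDomino_insertLeft {n i : ℕ} {d : List ℕ × List ℕ} (hi : i ≤ d.1.length) :
    IsDomino (n + 1) (insertLeft n d i) ↔ IsDomino n d ∧ i ∈ cutPositions d.1 := by
  have perm_cons : ((insertLeft n d i).1 ++ (insertLeft n d i).2).Perm (n :: (d.1 ++ d.2)) := by
    have := List.perm_middle (a := n) (l₁ := d.1.take i) (l₂ := d.1.drop i)
    rw [List.take_append_drop] at this
    exact this.append_right d.2
  have hp : ((insertLeft n d i).1 ++ (insertLeft n d i).2).Perm (List.range (n + 1)) ↔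
      (d.1 ++ d.2).Perm (List.range n) := by
    rw [perm_cons.congr_left, List.range_succ, (List.perm_append_singleton _ _).congr_right,
      List.perm_cons]
  have hlr (h : (d.1 ++ d.2).Perm (List.range n)) :
      (Avoids132 (insertLeft n d i).1 ↔ Avoids132 d.1 ∧ i ∈ cutPositions d.1) ∧
      (AvoidsSplit1324 (insertLeft n d i).1 (insertLeft n d i).2 ↔ AvoidsSplit1324 d.1 d.2) := by
    obtain ⟨h₁, h₂⟩ := List.forall_mem_append.1 fun x ↦ ((perm_range_iff.1 h).2 x).1
    rw [insertLeft, avoids132_insert_max (by rwa [List.take_append_drop]), List.take_append_drop,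
      cutPositions, Finset.mem_filter, Finset.mem_range, Nat.lt_succ_iff, and_iff_right hi,
      avoidsSplit1324_insert_max h₂, List.take_append_drop]
    exact ⟨.rfl, .rfl⟩
  constructor
  · rintro ⟨p, l, r, s⟩
    obtain ⟨hl, hs⟩ := hlr (hp.1 p)
    exact ⟨⟨hp.1 p, (hl.1 l).1, r, hs.1 s⟩, (hl.1 l).2⟩
  · rintro ⟨⟨p, l, r, s⟩, h⟩
    obtain ⟨hl, hs⟩ := hlr p
    exact ⟨hp.2 p, hl.2 ⟨l, h⟩, r, hs.2 s⟩

theorem not_isTopped_insertLeft {n i : ℕ} {d : List ℕ × List ℕ} (h : ∀ y ∈ d.2, y < n) :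
    ¬ IsTopped (insertLeft n d i) := fun ht ↦ by
  obtain ⟨y, hy, hny⟩ := ht n (by simp [insertLeft])
  exact (h y hy).not_gt hny

theorem exists_insertLeft_eq {n : ℕ} {d : List ℕ × List ℕ} (hd : IsDomino (n + 1) d)
    (ht : ¬ IsTopped d) : ∃ d' i, i ≤ d'.1.length ∧ insertLeft n d' i = d := by
  have hn : n ∈ d.1 := by
    by_contra hn
    have hn' : n ∈ d.2 :=
      (List.mem_append.1 (((perm_range_iff.1 hd.perm).2 n).2 n.lt_succ_self)).resolve_left hn
    refine ht fun x hx ↦ ⟨n, hn', ?_⟩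
    exact (Nat.lt_succ_iff.1 (hd.lt x (List.mem_append_left _ hx))).lt_of_ne (by grind)
  obtain ⟨X, Y, hXY⟩ := List.append_of_mem hn
  exact ⟨(X ++ Y, d.2), X.length, by simp, by simp [insertLeft, ← hXY]⟩

theorem insertLeft_injective {n i i' : ℕ} {d d' : List ℕ × List ℕ} (hn : n ∉ d.1)
    (hi : i ≤ d.1.length) (hi' : i' ≤ d'.1.length) (h : insertLeft n d i = insertLeft n d' i') :
    d = d' ∧ i = i' := by
  rw [insertLeft, insertLeft, Prod.mk.injEq] at h
  obtain ⟨h₁, h₂⟩ := h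
  have notMem {l : List ℕ} (hl : n ∉ l) (i : ℕ) : n ∉ l.take i ∧ n ∉ l.drop i :=
    ⟨fun h ↦ hl (List.mem_of_mem_take h), fun h ↦ hl (List.mem_of_mem_drop h)⟩
  obtain ⟨htake, -, hdrop⟩ := (List.append_cons_inj_of_notMem (notMem hn i).1 (notMem hn i).2).1 h₁
  refine ⟨Prod.ext ?_ h₂, ?_⟩
  · rw [← List.take_append_drop i d.1, htake, hdrop, List.take_append_drop]
  · simpa [hi, hi'] using congrArg List.length htake

theorem sum_dominoes_succ {M : Type*} [AddCommMonoid M] (n : ℕ) (f : List ℕ × List ℕ → M) :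
    ∑ d ∈ dominoes (n + 1), f d = ∑ d ∈ toppedDominoes (n + 1), f d +
      ∑ d ∈ dominoes n, ∑ i ∈ cutPositions d.1, f (insertLeft n d i) := by
  rw [← Finset.sum_filter_add_sum_filter_not (dominoes (n + 1)) IsTopped, Finset.sum_sigma']
  refine congrArg (_ + ·) ?_
  have le_length {d : List ℕ × List ℕ} {i : ℕ} (hi : i ∈ cutPositions d.1) : i ≤ d.1.length :=
    Nat.lt_succ_iff.1 (Finset.mem_range.1 (Finset.mem_filter.1 hi).1)
  refine (Finset.sum_nbij (fun x : (_ : List ℕ × List ℕ) × ℕ ↦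
    insertLeft n x.1 x.2) ?_ ?_ ?_ fun _ _ ↦ rfl).symm
  · rintro ⟨d, i⟩ h
    simp only [Finset.mem_sigma, Finset.mem_filter, mem_dominoes] at h ⊢
    exact ⟨(isDomino_insertLeft (le_length h.2)).2 h,
      not_isTopped_insertLeft (List.forall_mem_append.1 h.1.lt).2⟩
  · rintro ⟨d, i⟩ h ⟨d', i'⟩ h' heq
    simp only [Finset.coe_sigma, Set.mem_sigma_iff, Finset.mem_coe, mem_dominoes] at h h'
    have notMem {d : List ℕ × List ℕ} (h : IsDomino n d) : n ∉ d.1 := fun hn ↦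
      (h.lt n (List.mem_append_left _ hn)).false
    obtain ⟨rfl, rfl⟩ := insertLeft_injective (notMem h.1) (le_length h.2)
      (le_length h'.2) heq
    rfl
  · intro d hd
    obtain ⟨hd, ht⟩ := Finset.mem_filter.1 hd
    rw [mem_dominoes] at hd
    obtain ⟨d', i, hi, rfl⟩ := exists_insertLeft_eq hd ht
    refine ⟨⟨d', i⟩, ?_, rfl⟩
    simpa [mem_dominoes] using (isDomino_insertLeft hi).1 hd

/-- The generating polynomial of the dominoes of size `n` according to the number of right-to-left
maxima of the left list. -/
noncomputable def dominoPoly (n : ℕ) : ℚ[X] := ∑ d ∈ dominoes n, X ^ rlMaxima d.1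

/-- The part of `dominoPoly n` that comes from topped dominoes. -/
noncomputable def toppedPoly (n : ℕ) : ℚ[X] := ∑ d ∈ toppedDominoes n, X ^ rlMaxima d.1

theorem isDomino_zero {d : List ℕ × List ℕ} : IsDomino 0 d ↔ d = ([], []) := by
  refine ⟨fun h ↦ ?_, ?_⟩
  · simpa [Prod.ext_iff] using h.perm
  · rintro rfl
    exact ⟨.refl _, by simp [Avoids132], by simp [Avoids213], by simp [AvoidsSplit1324]⟩

theorem dominoes_zero : dominoes 0 = {([], [])} := by
  ext d
  rw [mem_dominoes, isDomino_zero, Finset.mem_singleton]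

theorem dominoPoly_zero : dominoPoly 0 = 1 := by
  simp [dominoPoly, dominoes_zero, rlMaxima]

theorem toppedPoly_zero : toppedPoly 0 = 1 := by
  simp [toppedPoly, toppedDominoes, dominoes_zero, IsTopped, rlMaxima, Finset.filter_singleton]

theorem toppedPoly_succ (n : ℕ) : toppedPoly (n + 1) =
    ∑ p ∈ Finset.HasAntidiagonal.antidiagonal n, dominoPoly p.1 * toppedPoly p.2 := by
  rw [toppedPoly, sum_toppedDominoes_succ]
  refine Finset.sum_congr rfl fun p _ ↦ ?_
  rw [dominoPoly, toppedPoly, Finset.sum_mul_sum]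
  refine Finset.sum_congr rfl fun d₁ h₁ ↦ Finset.sum_congr rfl fun d₂ _ ↦ ?_
  have hlt := (List.forall_mem_append.1 (mem_dominoes.1 h₁).lt).1
  rw [stack, rlMaxima_append (by grind), rlMaxima_map (fun a b h ↦ by grind), pow_add, mul_comm]

theorem sum_X_pow_rlMaxima_insertLeft {n : ℕ} {d : List ℕ × List ℕ} (hd : IsDomino n d) :
    ∑ i ∈ cutPositions d.1, (X : ℚ[X]) ^ rlMaxima (insertLeft n d i).1 =
      X * ∑ s ∈ Finset.range (rlMaxima d.1 + 1), X ^ s := by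
  have nodup : d.1.Nodup := (perm_range_iff.1 hd.perm).1.of_append_left
  rw [← sum_cutPositions hd.left nodup, Finset.mul_sum]
  refine Finset.sum_congr rfl fun i _ ↦ ?_
  have hlt : ∀ x ∈ d.1.take i ++ d.1.drop i, x < n := by
    rw [List.take_append_drop]
    exact (List.forall_mem_append.1 hd.lt).1
  rw [insertLeft, rlMaxima_insert_max hlt, pow_succ']

theorem dominoPoly_succ (n : ℕ) : (1 - X) * (dominoPoly (n + 1) - toppedPoly (n + 1)) =
    X * (((dominoes n).card : ℚ[X]) - X * dominoPoly n) := by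
  have h : dominoPoly (n + 1) - toppedPoly (n + 1) =
      ∑ d ∈ dominoes n, X * ∑ s ∈ Finset.range (rlMaxima d.1 + 1), X ^ s := by
    rw [dominoPoly, sum_dominoes_succ, toppedPoly, add_sub_cancel_left]
    exact Finset.sum_congr rfl fun d hd ↦ sum_X_pow_rlMaxima_insertLeft (mem_dominoes.1 hd)
  rw [h, ← Finset.mul_sum, mul_left_comm, Finset.mul_sum]
  simp only [mul_neg_geom_sum, Finset.sum_sub_distrib, Finset.sum_const, nsmul_one, pow_succ',
    ← Finset.mul_sum, dominoPoly]

end Enumeration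

section KernelMethod

open Polynomial

/-- The derivation of `A⟦X⟧` that applies a derivation of `A` to every coefficient; it
differentiates a power series with respect to a parameter in its coefficients. -/
noncomputable def coeffDerivation {k A : Type*} [CommRing k] [CommRing A] [Algebra k A]
    (d : Derivation k A A) : Derivation k (PowerSeries A) (PowerSeries A) :=
  .mk' { toFun p := PowerSeries.mk fun n ↦ d (PowerSeries.coeff n p)
         map_add' p q := by ext n; simp
         map_smul' c p := by ext n; simp } fun p q ↦ by
    ext n
    simp [PowerSeries.coeff_mul, Finset.sum_add_distrib, mul_comm,
      ← Finset.Nat.sum_antidiagonal_swap (f := fun x ↦ PowerSeries.coeff x.1 q * _)]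

theorem coeff_coeffDerivation {k A : Type*} [CommRing k] [CommRing A] [Algebra k A]
    (d : Derivation k A A) (p : PowerSeries A) (n : ℕ) :
    PowerSeries.coeff n (coeffDerivation d p) = d (PowerSeries.coeff n p) := by
  simp [coeffDerivation]

theorem coeffDerivation_C {k A : Type*} [CommRing k] [CommRing A] [Algebra k A]
    (d : Derivation k A A) (a : A) :
    coeffDerivation d (PowerSeries.C a) = PowerSeries.C (d a) := by
  ext n
  rw [coeff_coeffDerivation, PowerSeries.coeff_C, PowerSeries.coeff_C, apply_ite d, map_zero]

theorem coeffDerivation_map {k A : Type*} [CommRing k] [CommRing A] [Algebra k A]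
    (d : Derivation k A A) (p : PowerSeries k) :
    coeffDerivation d (PowerSeries.map (algebraMap k A) p) = 0 := by
  ext n
  rw [coeff_coeffDerivation, PowerSeries.coeff_map, d.map_algebraMap, map_zero]

theorem eq_zero_of_dvd_map_C {k : Type*} [CommRing k] [IsDomain k] {W : PowerSeries k[X]}
    {s : PowerSeries k} {a : k} (hW : W.constantCoeff ≠ 0) (ha : W.constantCoeff.IsRoot a)
    (h : W ∣ PowerSeries.map C s) : s = 0 := by
  obtain ⟨z, hz⟩ := h
  rw [← s.X_pow_order_mul_divXPowOrder, map_mul, map_pow, PowerSeries.map_X] at hz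
  have hX : ¬ PowerSeries.X ∣ W := by rwa [PowerSeries.X_dvd_iff]
  obtain ⟨z, rfl⟩ := PowerSeries.X_prime.pow_dvd_of_dvd_mul_left _ hX ⟨_, hz.symm⟩
  rw [mul_left_comm] at hz
  have hz := mul_left_cancel₀ (pow_ne_zero _ PowerSeries.X_ne_zero) hz
  have heval := congrArg (fun p ↦ (PowerSeries.constantCoeff p).eval a) hz
  rw [← PowerSeries.coeff_zero_eq_constantCoeff_apply, PowerSeries.coeff_map, eval_C, map_mul,
    eval_mul, ha.eq_zero, zero_mul, PowerSeries.coeff_zero_eq_constantCoeff_apply] at heval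
  exact PowerSeries.constantCoeff_divXPowOrder_eq_zero_iff.1 heval

theorem double_root_of_quadratic {Q : Type*} [CommRing Q] {t u f y w : Q}
    (ht : t ∈ (⊥ : Ideal Q).jacobson) (hy : y = 1 - t * w)
    (root : (1 - u + t * u ^ 2) * y ^ 2 - (1 - u + t * u ^ 2 - t ^ 2 * f * u) * y + t * (1 - u) = 0)
    (root_dy : 2 * (1 - u + t * u ^ 2) * y - (1 - u + t * u ^ 2 - t ^ 2 * f * u) = 0)
    (root_du : (2 * t * u - 1) * y ^ 2 - (2 * t * u - 1 - t ^ 2 * f) * y - t = 0) :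
    u = 1 + t * u ^ 3 ∧ t * (t * f - (1 - u) * (u - 2)) = 0 := by
  obtain ⟨v, hu⟩ : ∃ v, u = 1 + t * v := by
    obtain ⟨e, he⟩ := (Ideal.mem_jacobson_bot.1 ht (-2 * w)).exists_right_inv
    refine ⟨u ^ 2 + t * f * u * e, ?_⟩
    linear_combination (1 - u + t * u ^ 2) * he - e * root_dy + 2 * e * (1 - u + t * u ^ 2) * hy
  have y_sq : (1 - u + t * u ^ 2) * y ^ 2 = t * (1 - u) := by
    linear_combination y * root_dy - root
  have y_sq' : (u - 2) * y ^ 2 + (1 - t * u ^ 2) * y - t * u = 0 := by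
    linear_combination u * root_du - y * root_dy
  have factored : (1 - u * y) * ((u * y) ^ 3 - t * u ^ 2 * (u * y) * (1 + u * y + (u * y) ^ 2) +
      (t * u ^ 2) ^ 2 * (1 + u * y) ^ 2) = 0 := by
    linear_combination ((u * y) ^ 2 - t * u ^ 2) * u ^ 2 * y_sq' +
      (u * y + 1) * (u * y - t * u ^ 2) * u ^ 2 * y_sq
  -- The second factor is congruent to 1 modulo `t`.
  have unit_factor : IsUnit ((u * y) ^ 3 - t * u ^ 2 * (u * y) * (1 + u * y + (u * y) ^ 2) +
      (t * u ^ 2) ^ 2 * (1 + u * y) ^ 2) := by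
    have huy : u * y = 1 + t * (v - w - t * v * w) := by rw [hu, hy]; ring
    convert Ideal.mem_jacobson_bot.1 ht ((v - w - t * v * w) * (1 + u * y + (u * y) ^ 2) -
      u ^ 2 * (u * y) * (1 + u * y + (u * y) ^ 2) + t * u ^ 4 * (1 + u * y) ^ 2) using 1
    linear_combination (1 + u * y + (u * y) ^ 2) * huy
  have uy_eq_one : u * y = 1 := (sub_eq_zero.1 (unit_factor.mul_left_eq_zero.1 factored)).symm
  have cubic : u = 1 + t * u ^ 3 := by
    linear_combination (-u ^ 2) * y_sq + (1 - u + t * u ^ 2) * (u * y + 1) * uy_eq_one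
  have unit_u : IsUnit u := .of_mul_eq_one (1 - t * u ^ 2) (by linear_combination cubic)
  refine ⟨cubic, (unit_u.pow 2).mul_right_eq_zero.1 ?_⟩
  linear_combination u * root_dy - 2 * (1 - u + t * u ^ 2) * uy_eq_one - (u - 2) * cubic

theorem eq_of_eq_one_add_mul_cube {Q : Type*} [CommRing Q] {t a b : Q}
    (ht : t ∈ (⊥ : Ideal Q).jacobson) (ha : a = 1 + t * a ^ 3) (hb : b = 1 + t * b ^ 3) :
    a = b := by
  have unit := Ideal.mem_jacobson_bot.1 ht (-(a ^ 2 + a * b + b ^ 2))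
  refine sub_eq_zero.1 (unit.mul_left_eq_zero.1 ?_)
  linear_combination ha - hb

theorem quadratic_of_kernel {S : Type*} [CommRing S] {t u F Y E : S} (hE : E = 1 + t * Y * E)
    (hY : (1 - u) * (Y - E) = t * u * (F - u * Y)) :
    (1 - u + t * u ^ 2) * (1 - t * Y) ^ 2 -
      (1 - u + t * u ^ 2 - t ^ 2 * F * u) * (1 - t * Y) + t * (1 - u) = 0 := by
  linear_combination (-t * (1 - t * Y)) * hY - t * (1 - u) * hE

theorem derivation_quadratic {R S : Type*} [CommRing R] [CommRing S] [Algebra R S]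
    (D : Derivation R S S) {t u f y : S} (ht : D t = 0) (hu : D u = 1) (hf : D f = 0)
    (h : (1 - u + t * u ^ 2) * y ^ 2 - (1 - u + t * u ^ 2 - t ^ 2 * f * u) * y + t * (1 - u) = 0) :
    (2 * t * u - 1) * y ^ 2 - (2 * t * u - 1 - t ^ 2 * f) * y - t +
      (2 * (1 - u + t * u ^ 2) * y - (1 - u + t * u ^ 2 - t ^ 2 * f * u)) * D y = 0 := by
  have hD := congrArg D h
  simp only [map_add, map_sub, map_zero, D.leibniz, D.leibniz_pow, D.map_one_eq_zero, ht, hu, hf,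
    smul_eq_mul, nsmul_eq_mul] at hD
  push_cast at hD
  linear_combination hD

theorem dvd_of_quadratic {S : Type*} [CommRing S] {t u f y z w a : S}
    (ht : t ∈ (⊥ : Ideal S).jacobson) (hy : y = 1 - t * w) (ha : a = 1 + t * a ^ 3)
    (root : (1 - u + t * u ^ 2) * y ^ 2 - (1 - u + t * u ^ 2 - t ^ 2 * f * u) * y + t * (1 - u) = 0)
    (root_du : (2 * t * u - 1) * y ^ 2 - (2 * t * u - 1 - t ^ 2 * f) * y - t +
      (2 * (1 - u + t * u ^ 2) * y - (1 - u + t * u ^ 2 - t ^ 2 * f * u)) * z = 0) :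
    2 * (1 - u + t * u ^ 2) * y - (1 - u + t * u ^ 2 - t ^ 2 * f * u) ∣
      t * (t * f - (1 - a) * (a - 2)) := by
  set W := 2 * (1 - u + t * u ^ 2) * y - (1 - u + t * u ^ 2 - t ^ 2 * f * u) with hW
  let φ := Ideal.Quotient.mk (Ideal.span {W})
  have t_mem : φ t ∈ (⊥ : Ideal (S ⧸ Ideal.span {W})).jacobson := by
    rw [Ideal.jacobson_bot] at ht ⊢
    exact Ring.le_comap_jacobson φ ht
  have hyφ := congrArg φ hy
  have haφ := congrArg φ ha
  have root_dyφ := (congrArg φ hW).symm.trans (Ideal.Quotient.mk_singleton_self W)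
  have rootφ := congrArg φ root
  have root_duφ := congrArg φ root_du
  rw [map_add, map_mul, Ideal.Quotient.mk_singleton_self W] at root_duφ
  simp only [map_add, map_sub, map_mul, map_pow, map_one, map_zero, map_ofNat, zero_mul, add_zero]
    at hyφ haφ rootφ root_dyφ root_duφ
  obtain ⟨huφ, eq_zero⟩ := double_root_of_quadratic t_mem hyφ rootφ root_dyφ root_duφ
  rw [eq_of_eq_one_add_mul_cube t_mem huφ haφ] at eq_zero
  rw [← Ideal.mem_span_singleton, ← Ideal.Quotient.eq_zero_iff_mem]
  simpa only [map_sub, map_mul, map_one, map_ofNat] using eq_zero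

theorem X_mul_eq_of_kernel {k : Type*} [CommRing k] [IsDomain k] {F A : PowerSeries k}
    {Y E : PowerSeries k[X]} (hA : A = 1 + PowerSeries.X * A ^ 3)
    (hE : E = 1 + PowerSeries.X * Y * E)
    (hY : (1 - PowerSeries.C X) * (Y - E) = PowerSeries.X * PowerSeries.C X *
      (PowerSeries.map C F - PowerSeries.C X * Y)) :
    PowerSeries.X * F = (1 - A) * (A - 2) := by
  have t_mem : (PowerSeries.X : PowerSeries k[X]) ∈ (⊥ : Ideal (PowerSeries k[X])).jacobson :=
    IsAdicComplete.le_jacobson_bot (.span {PowerSeries.X}) (Ideal.mem_span_singleton_self _)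
  have cubic_A : PowerSeries.map C A = 1 + PowerSeries.X * PowerSeries.map C A ^ 3 := by
    conv_lhs => rw [hA]
    simp only [map_add, map_mul, map_pow, map_one, PowerSeries.map_X]
  have quadratic := quadratic_of_kernel hE hY
  have quadratic_du := derivation_quadratic (coeffDerivation derivative')
    (by rw [← PowerSeries.map_X C]; exact coeffDerivation_map _ _)
    (by rw [coeffDerivation_C, derivative'_apply, derivative_X, map_one])
    (coeffDerivation_map _ _) quadratic
  obtain ⟨W, hW, dvd⟩ : ∃ W : PowerSeries k[X], W.constantCoeff = 1 - X ∧
      W ∣ PowerSeries.map C (PowerSeries.X * (PowerSeries.X * F - (1 - A) * (A - 2))) := by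
    refine ⟨_, ?_, (dvd_of_quadratic t_mem rfl cubic_A quadratic quadratic_du).trans
      (dvd_of_eq ?_)⟩
    · simp only [map_sub, map_add, map_mul, map_pow, map_one, map_ofNat,
        PowerSeries.constantCoeff_X, PowerSeries.constantCoeff_C]
      ring
    · simp only [map_sub, map_mul, map_one, map_ofNat, PowerSeries.map_X]
  have X_mul_eq_zero := eq_zero_of_dvd_map_C (a := 1) (hW ▸ sub_ne_zero.2 (X_ne_C 1).symm)
    (by rw [hW, IsRoot, eval_sub, eval_one, eval_X, sub_self]) dvd
  exact sub_eq_zero.1 ((mul_eq_zero.1 X_mul_eq_zero).resolve_left PowerSeries.X_ne_zero)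

end KernelMethod

section Coefficients

open Nat

/-- The Raney numbers `(a + 1) / (3 n + a + 1) * (3 n + a + 1).choose n`, the coefficients of
`A ^ (a + 1)` for the power series with `A = 1 + X * A ^ 3`. -/
def raney (n a : ℕ) : ℚ := (a + 1) * (3 * n + a)! / (n ! * (2 * n + a + 1)!)

theorem raney_zero (a : ℕ) : raney 0 a = 1 := by
  have := factorial_ne_zero a
  simp only [raney, mul_zero, zero_add, factorial_zero, factorial_succ]
  push_cast
  field_simp

theorem raney_succ_zero (n : ℕ) : raney (n + 1) 0 = raney n 2 := by
  have := factorial_ne_zero n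
  have := factorial_ne_zero (2 * n + 3)
  simp only [raney, show 3 * (n + 1) + 0 = 3 * n + 2 + 1 by ring,
    show 2 * (n + 1) + 0 + 1 = 2 * n + 3 by ring, show 2 * n + 2 + 1 = 2 * n + 3 by ring,
    factorial_succ (3 * n + 2), factorial_succ n]
  push_cast
  field_simp
  ring

theorem raney_succ_succ (n a : ℕ) :
    raney (n + 1) (a + 1) = raney (n + 1) a + raney n (a + 3) := by
  have := factorial_ne_zero n
  have := factorial_ne_zero (2 * n + a + 3)
  simp only [raney, show 3 * (n + 1) + (a + 1) = (3 * n + a + 3) + 1 by ring,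
    show 2 * (n + 1) + (a + 1) + 1 = (2 * n + a + 3) + 1 by ring,
    show 2 * (n + 1) + a + 1 = 2 * n + a + 3 by ring,
    show 2 * n + (a + 3) + 1 = (2 * n + a + 3) + 1 by ring,
    show 3 * (n + 1) + a = 3 * n + a + 3 by ring, show 3 * n + (a + 3) = 3 * n + a + 3 by ring,
    factorial_succ (3 * n + a + 3), factorial_succ n, factorial_succ (2 * n + a + 3)]
  push_cast
  field_simp
  ring

theorem coeff_pow_eq_raney {A : PowerSeries ℚ} (hA : A = 1 + PowerSeries.X * A ^ 3) (n a : ℕ) :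
    PowerSeries.coeff n (A ^ (a + 1)) = raney n a := by
  have pow_succ_eq (k : ℕ) : A ^ (k + 1) = A ^ k + PowerSeries.X * A ^ (k + 3) := by
    linear_combination A ^ k * hA
  have constantCoeff_A : PowerSeries.constantCoeff A = 1 := by
    rw [hA]
    simp
  induction n generalizing a with
  | zero =>
    rw [PowerSeries.coeff_zero_eq_constantCoeff_apply, map_pow, constantCoeff_A, one_pow,
      raney_zero]
  | succ n ihn =>
    induction a with
    | zero =>
      rw [pow_succ_eq, map_add, PowerSeries.coeff_succ_X_mul, ihn 2, raney_succ_zero, pow_zero,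
        PowerSeries.coeff_one, if_neg n.succ_ne_zero, zero_add]
    | succ a iha =>
      rw [pow_succ_eq, map_add, PowerSeries.coeff_succ_X_mul, iha, ihn (a + 3), raney_succ_succ]

theorem exists_eq_one_add_X_mul_cube (k : Type*) [CommRing k] :
    ∃ A : PowerSeries k, A = 1 + PowerSeries.X * A ^ 3 := by
  -- The inverse `Z` of `A` is a root of the monic polynomial `z ^ 3 - z ^ 2 + X`.
  obtain ⟨Z, root, hZ⟩ := HenselianRing.is_henselian (I := .span {(PowerSeries.X : PowerSeries k)})
    (Polynomial.X ^ 3 - Polynomial.X ^ 2 + Polynomial.C PowerSeries.X) (by monicity!) 1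
    (by simp)
    (by
      convert isUnit_one
      simp only [Polynomial.derivative_add, Polynomial.derivative_sub,
        Polynomial.derivative_X_pow, Polynomial.derivative_C, Polynomial.eval_add,
        Polynomial.eval_sub, Polynomial.eval_mul, Polynomial.eval_pow, Polynomial.eval_X,
        Polynomial.eval_C, Polynomial.eval_zero]
      rw [← map_one (Ideal.Quotient.mk _)]
      norm_num)
  have cubic : Z ^ 3 - Z ^ 2 + PowerSeries.X = 0 := by
    simpa only [Polynomial.IsRoot.def, Polynomial.eval_add, Polynomial.eval_sub,
      Polynomial.eval_pow, Polynomial.eval_X, Polynomial.eval_C] using root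
  have unit_Z : IsUnit Z := by
    rw [Ideal.mem_span_singleton, PowerSeries.X_dvd_iff, map_sub, map_one, sub_eq_zero] at hZ
    rw [PowerSeries.isUnit_iff_constantCoeff, hZ]
    exact isUnit_one
  obtain ⟨A, hA⟩ := unit_Z.exists_right_inv
  refine ⟨A, ?_⟩
  have hA₂ : Z ^ 2 * A ^ 2 = 1 := by rw [← mul_pow, hA, one_pow]
  have hA₃ : Z ^ 3 * A ^ 3 = 1 := by rw [← mul_pow, hA, one_pow]
  linear_combination hA₃ - A * hA₂ - A ^ 3 * cubic

theorem mk_toppedPoly : PowerSeries.mk toppedPoly =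
    1 + PowerSeries.X * PowerSeries.mk dominoPoly * PowerSeries.mk toppedPoly := by
  ext1 n
  cases n with
  | zero => simp [mul_assoc, toppedPoly_zero]
  | succ n =>
    rw [mul_assoc, map_add, PowerSeries.coeff_succ_X_mul, PowerSeries.coeff_one,
      if_neg n.succ_ne_zero, zero_add, PowerSeries.coeff_mul, PowerSeries.coeff_mk, toppedPoly_succ]
    simp only [PowerSeries.coeff_mk]

theorem mk_dominoPoly : (1 - PowerSeries.C Polynomial.X) *
    (PowerSeries.mk dominoPoly - PowerSeries.mk toppedPoly) =
      PowerSeries.X * PowerSeries.C Polynomial.X *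
        (PowerSeries.map Polynomial.C (PowerSeries.mk fun n ↦ ((dominoes n).card : ℚ)) -
          PowerSeries.C Polynomial.X * PowerSeries.mk dominoPoly) := by
  rw [← map_one PowerSeries.C, ← map_sub]
  ext1 n
  cases n with
  | zero => simp [mul_assoc, toppedPoly_zero, dominoPoly_zero]
  | succ n =>
    rw [mul_assoc, PowerSeries.coeff_succ_X_mul, PowerSeries.coeff_C_mul, PowerSeries.coeff_C_mul]
    simp only [map_sub, PowerSeries.coeff_C_mul, PowerSeries.coeff_mk, PowerSeries.coeff_map,
      map_natCast, dominoPoly_succ]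

theorem card_dominoes_eq_raney (n : ℕ) :
    ((dominoes n).card : ℚ) = 3 * raney (n + 1) 0 - raney (n + 1) 1 := by
  obtain ⟨A, hA⟩ := exists_eq_one_add_X_mul_cube ℚ
  have gf := X_mul_eq_of_kernel hA mk_toppedPoly mk_dominoPoly
  have gf_coeff := congr_arg (PowerSeries.coeff (n + 1)) <| gf.trans <|
    show _ = PowerSeries.C 3 * A ^ (0 + 1) - A ^ (1 + 1) - PowerSeries.C 2 by
      simp only [map_ofNat]
      ring
  simpa only [PowerSeries.coeff_succ_X_mul, PowerSeries.coeff_mk, map_sub,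
    PowerSeries.coeff_C_mul, coeff_pow_eq_raney hA, PowerSeries.coeff_C, n.succ_ne_zero, if_false,
    sub_zero] using gf_coeff

theorem card_dominoes (n : ℕ) :
    (n + 2)! * (2 * n + 3)! * (dominoes n).card = 2 * (3 * n + 3)! := by
  have := factorial_ne_zero (n + 1)
  have := factorial_ne_zero (2 * n + 3)
  rw [← Nat.cast_inj (R := ℚ)]
  push_cast
  simp only [card_dominoes_eq_raney, raney, show 3 * (n + 1) + 0 = 3 * n + 3 by ring,
    show 2 * (n + 1) + 0 + 1 = 2 * n + 3 by ring, show 3 * (n + 1) + 1 = 3 * n + 3 + 1 by ring,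
    factorial_succ (3 * n + 3), factorial_succ (2 * n + 3), factorial_succ (n + 1)]
  push_cast
  field_simp
  ring

end Coefficients

section Words

open List

/-- No `a < b < c < d` occur in the list in the order `a, c, b, d`. -/
def WordAvoids1324 {α : Type*} [LinearOrder α] (l : List α) : Prop :=
  ∀ ⦃a c b d⦄, [a, c, b, d] <+ l → ¬(a < b ∧ b < c ∧ c < d)

theorem triplewise_iff_forall_sublist {α : Type*} {l : List α} {p : α → α → α → Prop} :
    l.Triplewise p ↔ ∀ ⦃a b c⦄, [a, b, c] <+ l → p a b c := by
  induction l with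
  | nil => simp
  | cons x l ih =>
    rw [triplewise_cons, pairwise_iff_forall_sublist, ih]
    grind

theorem wordAvoids1324_append_cons_cons {α : Type*} [LinearOrder α] {A B : List α} {m M : α}
    (hm : ∀ x ∈ A ++ B, m < x) (hM : ∀ x ∈ A ++ B, x < M) :
    WordAvoids1324 (A ++ m :: M :: B) ↔ Avoids132 A ∧ Avoids213 B ∧ AvoidsSplit1324 A B := by
  rw [forall_mem_append] at hm hM
  simp only [Avoids132, Avoids213, AvoidsSplit1324, pairwise_iff_forall_sublist,
    triplewise_iff_forall_sublist, WordAvoids1324]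
  refine ⟨fun h ↦ ⟨fun a c b hA habc ↦ ?_, fun b a c hB habc ↦ ?_, fun {a c} hA {b d} hB ↦ ?_⟩,
    fun ⟨h132, h213, hsplit⟩ a c b d h ⟨hab, hbc, hcd⟩ ↦ ?_⟩
  · have max_end : [M] <+ m :: M :: B := by simp
    exact h (hA.append max_end) ⟨habc.1, habc.2, hM.1 c (hA.subset (by simp))⟩
  · have min_start : m :: [b, a, c] <+ m :: M :: B := (hB.cons M).cons_cons m
    exact h (min_start.trans (sublist_append_right A _)) ⟨hm.2 a (hB.subset (by simp)), habc⟩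
  · exact h (hA.append ((hB.cons M).cons m))
  · have not_right : ¬ [c, b, d] <+ M :: B := fun hs ↦ by
      have c_ne : c ≠ M := fun hc ↦ by grind [hs.subset (mem_of_mem_getLast? (a := d) rfl)]
      exact h213 (hs.of_cons_of_ne c_ne) ⟨hbc, hcd⟩
    obtain ⟨l₁, l₂, hl, h₁, h₂⟩ := sublist_append_iff.1 h
    match l₁ with
    | [] =>
      obtain rfl : _ = l₂ := hl
      exact not_right h₂.of_cons_cons
    | [_] =>
      obtain ⟨rfl, rfl⟩ : a = _ ∧ [c, b, d] = l₂ := by simpa using hl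
      have c_ne : c ≠ m := ((hm.1 a (h₁.subset (by simp))).trans (hab.trans hbc)).ne'
      exact not_right (h₂.of_cons_of_ne c_ne)
    | [_, _] =>
      obtain ⟨rfl, rfl, rfl⟩ : a = _ ∧ c = _ ∧ [b, d] = l₂ := by simpa using hl
      have b_ne_m : b ≠ m := ((hm.1 a (h₁.subset (by simp))).trans hab).ne'
      have b_ne_M : b ≠ M := (hbc.trans (hM.1 c (h₁.subset (by simp)))).ne
      exact hsplit h₁ ((h₂.of_cons_of_ne b_ne_m).of_cons_of_ne b_ne_M) ⟨hab, hbc, hcd⟩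
    | _ :: _ :: _ :: l =>
      obtain ⟨rfl, rfl, rfl, -⟩ : a = _ ∧ c = _ ∧ b = _ ∧ [d] = l ++ l₂ := by simpa using hl
      exact h132 ((sublist_append_left [a, c, b] l).trans h₁) ⟨hab, hbc⟩

/-- The word `σ 0, …, σ (n - 1)` of a permutation, with values in `ℕ`. -/
def word {n : ℕ} (σ : Equiv.Perm (Fin n)) : List ℕ := ofFn fun i ↦ (σ i : ℕ)

theorem word_injective (n : ℕ) : Function.Injective (word (n := n)) := fun _ _ h ↦
  Equiv.ext fun i ↦ Fin.ext (congr_fun (ofFn_injective h) i)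

theorem word_perm_range {n : ℕ} (σ : Equiv.Perm (Fin n)) : (word σ).Perm (range n) := by
  refine perm_range_iff.2 ⟨nodup_ofFn.2 (Fin.val_injective.comp σ.injective), fun x ↦ ?_⟩
  simp only [word, mem_ofFn]
  exact ⟨fun ⟨i, hi⟩ ↦ hi ▸ (σ i).isLt, fun hx ↦ ⟨σ.symm ⟨x, hx⟩, by simp⟩⟩

theorem exists_word_eq {n : ℕ} {l : List ℕ} (h : l.Perm (range n)) :
    ∃ σ : Equiv.Perm (Fin n), word σ = l := by
  obtain ⟨nodup, mem⟩ := perm_range_iff.1 h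
  have length_l : l.length = n := h.length_eq.trans length_range
  let f (i : Fin n) : Fin n := ⟨l[i], (mem _).1 (getElem_mem _)⟩
  have inj_f : Function.Injective f := fun i j hij ↦
    Fin.ext (nodup.getElem_inj_iff.1 (congr_arg Fin.val hij))
  refine ⟨.ofBijective f (Finite.injective_iff_bijective.1 inj_f), ?_⟩
  subst length_l
  exact ofFn_getElem

theorem sublist_finRange_iff {n : ℕ} {l : List (Fin n)} : l <+ finRange n ↔ l.Pairwise (· < ·) := by
  refine ⟨fun h ↦ (pairwise_lt_finRange n).sublist h, fun h ↦ ?_⟩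
  exact sublist_of_subperm_of_pairwise (subperm_of_subset (h.imp ne_of_lt) fun x _ ↦ mem_finRange x)
    h (pairwise_lt_finRange n)

theorem avoids1324_iff_word {n : ℕ} (σ : Equiv.Perm (Fin n)) :
    Avoids1324 σ ↔ WordAvoids1324 (word σ) := by
  simp only [Avoids1324, word, ofFn_eq_map, WordAvoids1324]
  constructor
  · intro h _ _ _ _ hl ⟨hab, hbc, hcd⟩
    obtain ⟨l, hl, hmap⟩ := sublist_map_iff.1 hl
    match l with
    | [i, j, k, l] =>
      have sorted := sublist_finRange_iff.1 hl
      simp only [map_cons, map_nil, cons.injEq, and_true] at hmap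
      obtain ⟨rfl, rfl, rfl, rfl⟩ := hmap
      exact h ⟨i, j, k, l, by grind, by grind, by grind, hab, hbc, hcd⟩
  · rintro h ⟨i, j, k, l, hij, hjk, hkl, hσ⟩
    have sub : [i, j, k, l] <+ finRange n := sublist_finRange_iff.2 (by grind)
    exact h (sub.map _) hσ

theorem zero_last_isInfix_word_iff {N : ℕ} (σ : Equiv.Perm (Fin (N + 2))) :
    [0, N + 1] <:+: word σ ↔
      (σ.symm (Fin.last (N + 1)) : ℕ) = (σ.symm 0 : ℕ) + 1 := by
  have getElem?_eq_some (k : ℕ) (v : Fin (N + 2)) :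
      (word σ)[k]? = some (v : ℕ) ↔ (σ.symm v : ℕ) = k := by
    rw [word, getElem?_eq_some_iff]
    simp only [List.getElem_ofFn, length_ofFn, Fin.val_inj, ← Equiv.eq_symm_apply]
    exact ⟨fun ⟨_, h⟩ ↦ h ▸ rfl, fun h ↦ ⟨h ▸ Fin.isLt _, Fin.ext h.symm⟩⟩
  rw [infix_iff_getElem?]
  constructor
  · rintro ⟨k, -, h⟩
    have h₀ := (getElem?_eq_some _ 0).1 (h 0 Nat.zero_lt_two)
    have h₁ := (getElem?_eq_some _ (Fin.last _)).1 (h 1 Nat.one_lt_two)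
    rw [h₀, h₁]
    lia
  · intro h
    have h₀ := (getElem?_eq_some _ 0).2 rfl
    have h₁ := (getElem?_eq_some _ (Fin.last _)).2 h
    refine ⟨σ.symm 0, by grind [word], fun i hi ↦ ?_⟩
    obtain rfl | rfl : i = 0 ∨ i = 1 := Nat.le_one_iff_eq_zero_or_eq_one.1 (Nat.le_of_lt_succ hi)
    · simpa using h₀
    · simpa [add_comm] using h₁

theorem mem_sPerm_iff {N : ℕ} {σ : Equiv.Perm (Fin (N + 2))} :
    σ ∈ SPerm (N + 2) 1 1 ↔ WordAvoids1324 (word σ) ∧ [0, N + 1] <:+: word σ := by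
  rw [zero_last_isInfix_word_iff, ← avoids1324_iff_word]
  exact and_congr_right fun _ ↦ ⟨fun ⟨_, _, h, _⟩ ↦ h, fun h ↦
    ⟨by lia, by lia, h, fun b hb ↦ absurd hb (by lia)⟩⟩

/-- The word `A, 0, N + 1, B` for the domino `(A, B)` of size `N`, whose entries are raised by 1. -/
def frame (N : ℕ) (d : List ℕ × List ℕ) : List ℕ :=
  d.1.map Nat.succ ++ 0 :: (N + 1) :: d.2.map Nat.succ

theorem isInfix_frame (N : ℕ) (d : List ℕ × List ℕ) : [0, N + 1] <:+: frame N d :=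
  ⟨d.1.map Nat.succ, d.2.map Nat.succ, by simp [frame]⟩

theorem frame_injective (N : ℕ) : Function.Injective (frame N) := by
  intro d d' h
  rw [frame, frame, append_cons_inj_of_notMem (by simp) (by simp), cons_inj_right,
    (map_injective_iff.2 Nat.succ_injective).eq_iff,
    (map_injective_iff.2 Nat.succ_injective).eq_iff] at h
  exact Prod.ext h.1 h.2.2

theorem frame_perm_range_iff {N : ℕ} {d : List ℕ × List ℕ} :
    (frame N d).Perm (range (N + 2)) ↔ (d.1 ++ d.2).Perm (range N) := by
  have hl : (frame N d).Perm (0 :: (N + 1) :: (d.1 ++ d.2).map Nat.succ) := by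
    grind [frame]
  have hr : (range (N + 2)).Perm (0 :: (N + 1) :: (range N).map Nat.succ) := by
    rw [range_succ_eq_map, range_succ]
    grind
  rw [hl.congr_left, hr.congr_right, perm_cons, perm_cons, map_perm_map_iff Nat.succ_injective]

theorem isDomino_iff_frame {N : ℕ} {d : List ℕ × List ℕ} :
    IsDomino N d ↔ (frame N d).Perm (range (N + 2)) ∧ WordAvoids1324 (frame N d) := by
  have avoids_iff (lt_N : ∀ x ∈ d.1 ++ d.2, x < N) : WordAvoids1324 (frame N d) ↔
      Avoids132 d.1 ∧ Avoids213 d.2 ∧ AvoidsSplit1324 d.1 d.2 := by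
    have succ_mono : StrictMono Nat.succ := fun _ _ ↦ Nat.succ_lt_succ
    rw [frame, wordAvoids1324_append_cons_cons, avoids132_map succ_mono, avoids213_map succ_mono,
      avoidsSplit1324_map succ_mono]
    · exact map_append ▸ forall_mem_map.2 fun x _ ↦ x.succ_pos
    · exact map_append ▸ forall_mem_map.2 fun x hx ↦ Nat.succ_lt_succ (lt_N x hx)
  rw [frame_perm_range_iff]
  refine ⟨fun h ↦ ⟨h.perm, (avoids_iff h.lt).2 ⟨h.left, h.right, h.split⟩⟩, fun ⟨perm, avoids⟩ ↦ ?_⟩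
  obtain ⟨left, right, split⟩ := (avoids_iff fun x ↦ ((perm_range_iff.1 perm).2 x).1).1 avoids
  exact ⟨perm, left, right, split⟩

theorem exists_frame_eq {N : ℕ} {l : List ℕ} (hl : l.Nodup)
    (h : [0, N + 1] <:+: l) : ∃ d, frame N d = l := by
  obtain ⟨A, B, rfl⟩ := h
  have unshift (L : List ℕ) (hL : 0 ∉ L) : ∃ L' : List ℕ, L'.map Nat.succ = L := by
    rw [← Set.mem_range, Set.range_list_map, Nat.range_succ]
    exact fun x hx ↦ Nat.pos_of_ne_zero fun h ↦ hL (h ▸ hx)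
  obtain ⟨A, rfl⟩ := unshift A (by grind)
  obtain ⟨B, rfl⟩ := unshift B (by grind)
  exact ⟨(A, B), by simp [frame]⟩

theorem word_image_sPerm (N : ℕ) : word '' SPerm (N + 2) 1 1 = frame N '' {d | IsDomino N d} := by
  ext l
  constructor
  · rintro ⟨σ, hσ, rfl⟩
    obtain ⟨avoids, adjacent⟩ := mem_sPerm_iff.1 hσ
    obtain ⟨d, hd⟩ := exists_frame_eq (perm_range_iff.1 (word_perm_range σ)).1 adjacent
    exact ⟨d, isDomino_iff_frame.2 (hd ▸ ⟨word_perm_range σ, avoids⟩), hd⟩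
  · rintro ⟨d, hd, rfl⟩
    obtain ⟨perm, avoids⟩ := isDomino_iff_frame.1 hd
    obtain ⟨σ, hσ⟩ := exists_word_eq perm
    exact ⟨σ, mem_sPerm_iff.2 (hσ ▸ ⟨avoids, isInfix_frame N d⟩), hσ⟩

theorem ncard_sPerm (N : ℕ) : (SPerm (N + 2) 1 1).ncard = (dominoes N).card := by
  rw [← Set.ncard_image_of_injective _ (word_injective _), word_image_sPerm,
    Set.ncard_image_of_injective _ (frame_injective N), ← Set.ncard_coe_finset]
  congr
  ext d
  exact mem_dominoes.symm

end Words

/-- with `a_{n,1}` the number of 1324-avoiding permutations of `{1,…,n}`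
having the `n` immediately to the right of the `1`, we have
`n! ⬝ (2n-1)! ⬝ a_{n,1} = 2 ⬝ (3n-3)!`. -/
theorem stmt_2 (n : ℕ) (hn : 2 ≤ n) :
    Nat.factorial n * Nat.factorial (2 * n - 1) * (SPerm n 1 1).ncard =
      2 * Nat.factorial (3 * n - 3) := by
  obtain ⟨N, rfl⟩ := Nat.exists_eq_add_of_le' hn
  rw [ncard_sPerm, show 2 * (N + 2) - 1 = 2 * N + 3 by lia,
    show 3 * (N + 2) - 3 = 3 * N + 3 by lia]
  exact card_dominoes N
end
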